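/- The series Σ_{n=1}^∞ κ(n)·a₁²/βⁿ converges; equivalently, the sequence n ↦ κ(n)/βⁿ is summable. (This is the finiteness of the total measure λ_R(R) of the natural-extension domain.) -/

import Mathlib

open MeasureTheory Set

/-- The greedy β-transformation with deleted digit set `{0, a₁, a₂}`:
`T x = βx` on `Δ(0) = [0, a₁/β)`, `T x = βx − a₁` on `Δ(a₁) = [a₁/β, a₂/β)`,
and `T x = βx − a₂` on `Δ(a₂) = [a₂/β, a₁)`. -/
noncomputable def greedyT (β a₁ a₂ : ℝ) (x : ℝ) : ℝ :=
  if x < a₁ / β then β * x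
  else if x < a₂ / β then β * x - a₁
  else β * x - a₂

/-- The interval `Δ(b)` associated to a digit `b ∈ {0, a₁, a₂}`. -/
noncomputable def digitInt (β a₁ a₂ : ℝ) (b : ℝ) : Set ℝ :=
  if b = 0 then Set.Ico 0 (a₁ / β)
  else if b = a₁ then Set.Ico (a₁ / β) (a₂ / β)
  else Set.Ico (a₂ / β) a₁

/-- The fundamental interval `Δ(w) = ⋂_{k < n} T⁻ᵏ Δ(b_k)` of a word
`w = (b₀, …, b_{n−1})`. -/
noncomputable def cyl (β a₁ a₂ : ℝ) (w : List ℝ) : Set ℝ :=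
  ⋂ k ∈ Finset.range w.length,
    (greedyT β a₁ a₂)^[k] ⁻¹' digitInt β a₁ a₂ (w.getD k 0)

/-- `w` is a word over the alphabet `A = {0, a₁, a₂}`. -/
def isWord (a₁ a₂ : ℝ) (w : List ℝ) : Prop := ∀ b ∈ w, b = 0 ∨ b = a₁ ∨ b = a₂

/-- The fundamental interval `Δ(w)` is full: `λ(Δ(w)) = a₁/β^|w|`. -/
def isFull (β a₁ a₂ : ℝ) (w : List ℝ) : Prop :=
  volume (cyl β a₁ a₂ w) = ENNReal.ofReal (a₁ / β ^ w.length)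

/-- Condition (6): `a₁ · max (β−1) 1 < a₂ < a₁ · min 2 β`. -/
def condition6 (β a₁ a₂ : ℝ) : Prop :=
  a₁ * max (β - 1) 1 < a₂ ∧ a₂ < a₁ * min 2 β

/-- `w ∈ Bₙ`: `w` is a word of length `n` over `A` with `λ(Δ(w)) > 0`, `Δ(w)`
non-full, and `Δ(w′)` non-full for every nonempty proper prefix `w′` of `w`. -/
def memB (β a₁ a₂ : ℝ) (n : ℕ) (w : List ℝ) : Prop :=
  w.length = n ∧ isWord a₁ a₂ w ∧ 0 < volume (cyl β a₁ a₂ w) ∧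
    ¬ isFull β a₁ a₂ w ∧
    ∀ w' : List ℝ, w' ≠ [] → w' <+: w → w' ≠ w → ¬ isFull β a₁ a₂ w'

/-- `κ(n)`: the number of elements of `Bₙ`. -/
noncomputable def kappa (β a₁ a₂ : ℝ) (n : ℕ) : ℕ :=
  {w : List ℝ | memB β a₁ a₂ n w}.ncard

/-!
On a cylinder `Δ(w)` of rank `n` the map `Tⁿ` is affine with slope `βⁿ` and image `[0, t)` for some
`t ≤ a₁`, and `Δ(w)` is full iff `t = a₁`. Cutting `[0, βt)` at `a₁` and `a₂` shows that a cylinder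
has at most one more non-full child than full children, while each full child uses up a length `a₁`
of `[0, βt)`. Hence, if `N n` counts the words of length `n` with nonempty cylinder and no full
prefix, and `L n` is the total length of their images, then
`a₁ N (n + 1) + L (n + 1) ≤ a₁ N n + β L n`. So `Φ n = (a₁ N n + L n) / βⁿ` satisfies
`(1 - 1/β) a₁ N n / βⁿ ≤ Φ n - Φ (n + 1)`, and summing over `n` bounds `∑ N n / βⁿ`.
-/

theorem summable_div_pow_of_add_le {β : ℝ} (hβ : 1 < β) {N L : ℕ → ℝ} (hN : ∀ n, 0 ≤ N n)
    (hL : ∀ n, 0 ≤ L n) (h : ∀ n, N (n + 1) + L (n + 1) ≤ N n + β * L n) :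
    Summable fun n => N n / β ^ n := by
  have hβ0 : 0 < β := one_pos.trans hβ
  set Φ : ℕ → ℝ := fun n => (N n + L n) / β ^ n with hΦ
  have hΦ_nonneg (n : ℕ) : 0 ≤ Φ n := div_nonneg (add_nonneg (hN n) (hL n)) (by positivity)
  have hdrop (n : ℕ) : (1 - 1 / β) * (N n / β ^ n) ≤ Φ n - Φ (n + 1) := by
    have hle : Φ (n + 1) ≤ (N n + β * L n) / β ^ (n + 1) :=
      div_le_div_of_nonneg_right (h n) (by positivity)
    calc (1 - 1 / β) * (N n / β ^ n) = Φ n - (N n + β * L n) / β ^ (n + 1) := by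
          simp only [hΦ]
          field_simp
          ring
      _ ≤ Φ n - Φ (n + 1) := sub_le_sub_left hle _
  have hpos : 0 < 1 - 1 / β := sub_pos.2 ((div_lt_one hβ0).2 hβ)
  refine (summable_mul_left_iff hpos.ne').1 (summable_of_sum_range_le (c := Φ 0)
    (fun n => mul_nonneg hpos.le (div_nonneg (hN n) (by positivity))) fun n => ?_)
  calc ∑ i ∈ Finset.range n, (1 - 1 / β) * (N i / β ^ i)
      ≤ ∑ i ∈ Finset.range n, (Φ i - Φ (i + 1)) := Finset.sum_le_sum fun i _ => hdrop i
    _ = Φ 0 - Φ n := Finset.sum_range_sub' Φ n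
    _ ≤ Φ 0 := sub_le_self _ (hΦ_nonneg n)

/-- The alphabet `A = {0, a₁, a₂}`. -/
noncomputable def digits (a₁ a₂ : ℝ) : Finset ℝ := {0, a₁, a₂}

/-- The right endpoint of `β • Δ(b)`: the digit following `b`, or `β * a₁` for the top digit. It
makes `Δ(b) = [b / β, nextDigit b / β)` for all three digits. -/
noncomputable def nextDigit (β a₁ a₂ b : ℝ) : ℝ :=
  if b = 0 then a₁ else if b = a₁ then a₂ else β * a₁

/-- If `Tⁿ Δ(w) = [0, t)`, then `childLength β a₁ a₂ t b` is the length of `Tⁿ⁺¹ Δ(wb)`. It is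
non-positive when `Δ(wb)` is empty. -/
noncomputable def childLength (β a₁ a₂ t b : ℝ) : ℝ := min (β * t) (nextDigit β a₁ a₂ b) - b

/-- The length of the image `Tⁿ Δ(w)` of the cylinder of a word `w` of length `n`; non-positive when
`Δ(w)` is empty. The cylinder of the empty word counts as `[0, a₁)`, whereas `cyl β a₁ a₂ []` is all
of `ℝ`. -/
noncomputable def imageLength (β a₁ a₂ : ℝ) (w : List ℝ) : ℝ := w.foldl (childLength β a₁ a₂) a₁

/-- The affine map `ℝ → ℝ` of slope `βⁿ` that extends `Tⁿ` from the cylinder of a word `w` of length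
`n`. -/
def affineBranch (β : ℝ) (w : List ℝ) (x : ℝ) : ℝ := w.foldl (fun y b => β * y - b) x

/-- The digits `b` for which a cylinder with image `[0, t)` has a non-full child `Δ(wb)` of positive
length. -/
noncomputable def nonfullDigits (β a₁ a₂ t : ℝ) : Finset ℝ :=
  {b ∈ digits a₁ a₂ | childLength β a₁ a₂ t b ∈ Ioo 0 a₁}

/-- The words of length `n` all of whose nonempty prefixes have non-full cylinders of positive
length. -/
noncomputable def nonfullWords (β a₁ a₂ : ℝ) : ℕ → Finset (List ℝ)
  | 0 => {[]}
  | n + 1 => ((nonfullWords β a₁ a₂ n).sigma fun w =>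
      nonfullDigits β a₁ a₂ (imageLength β a₁ a₂ w)).image fun p => p.1 ++ [p.2]

section

variable {β a₁ a₂ b t x : ℝ} {w : List ℝ} {n : ℕ}

theorem condition6_iff (ha₁ : 0 < a₁) :
    condition6 β a₁ a₂ ↔
      (a₁ * (β - 1) < a₂ ∧ a₁ < a₂) ∧ a₂ < a₁ * 2 ∧ a₂ < a₁ * β := by
  simp only [condition6, mul_max_of_nonneg _ _ ha₁.le, mul_min_of_nonneg _ _ ha₁.le, max_lt_iff,
    lt_min_iff, mul_one]

theorem mem_digits : b ∈ digits a₁ a₂ ↔ b = 0 ∨ b = a₁ ∨ b = a₂ := by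
  simp only [digits, Finset.mem_insert, Finset.mem_singleton]

theorem nonneg_of_mem_digits (ha₁ : 0 ≤ a₁) (ha₂ : 0 ≤ a₂) (hb : b ∈ digits a₁ a₂) : 0 ≤ b := by
  rcases mem_digits.1 hb with rfl | rfl | rfl
  exacts [le_rfl, ha₁, ha₂]

theorem isWord_append_singleton :
    isWord a₁ a₂ (w ++ [b]) ↔ isWord a₁ a₂ w ∧ b ∈ digits a₁ a₂ := by
  simp only [isWord, List.forall_mem_append, List.forall_mem_singleton, mem_digits]

theorem digitInt_eq_Ico (hβ : β ≠ 0) (hb : b ∈ digits a₁ a₂) :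
    digitInt β a₁ a₂ b = Ico (b / β) (nextDigit β a₁ a₂ b / β) := by
  unfold digitInt nextDigit
  split_ifs with h₀ h₁
  · rw [h₀, zero_div]
  · rw [h₁]
  · obtain rfl : b = a₂ := ((mem_digits.1 hb).resolve_left h₀).resolve_left h₁
    rw [mul_div_cancel_left₀ _ hβ]

theorem greedyT_of_mem_digitInt (hβ : 0 < β) (h₁₂ : a₁ ≤ a₂) (hb : b ∈ digits a₁ a₂)
    (hx : x ∈ digitInt β a₁ a₂ b) : greedyT β a₁ a₂ x = β * x - b := by
  have hdiv : a₁ / β ≤ a₂ / β := by gcongr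
  unfold digitInt at hx
  split_ifs at hx with h₀ h₁
  · rw [greedyT, if_pos hx.2, h₀, sub_zero]
  · rw [greedyT, if_neg hx.1.not_gt, if_pos hx.2, h₁]
  · obtain rfl : b = a₂ := ((mem_digits.1 hb).resolve_left h₀).resolve_left h₁
    rw [greedyT, if_neg (hdiv.trans hx.1).not_gt, if_neg hx.1.not_gt]

theorem digitInt_subset_Ico (hβ : 0 < β) (ha₁ : 0 ≤ a₁) (h₁₂ : a₁ ≤ a₂) (h₂β : a₂ ≤ a₁ * β) :
    digitInt β a₁ a₂ b ⊆ Ico 0 a₁ := by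
  have h₁ : 0 ≤ a₁ / β := by positivity
  have h₂ : a₁ / β ≤ a₂ / β := by gcongr
  have h₃ : a₂ / β ≤ a₁ := (div_le_iff₀ hβ).2 h₂β
  unfold digitInt
  split_ifs
  · exact Ico_subset_Ico_right (h₂.trans h₃)
  · exact Ico_subset_Ico h₁ h₃
  · exact Ico_subset_Ico_left (h₁.trans h₂)

theorem mem_Ico_and_mem_digitInt_iff (hβ : 0 < β) (hb : b ∈ digits a₁ a₂) (hb₀ : 0 ≤ b) :
    x ∈ Ico 0 t ∧ x ∈ digitInt β a₁ a₂ b ↔ β * x - b ∈ Ico 0 (childLength β a₁ a₂ t b) := by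
  rw [digitInt_eq_Ico hβ.ne' hb, childLength]
  simp only [mem_Ico, div_le_iff₀' hβ, lt_div_iff₀' hβ, sub_nonneg, sub_lt_sub_iff_right,
    lt_min_iff, mul_lt_mul_iff_right₀ hβ]
  have hx : b ≤ β * x → 0 ≤ x := fun h => nonneg_of_mul_nonneg_right (hb₀.trans h) hβ
  tauto

theorem childLength_le (h₂ : a₂ ≤ a₁ * 2) (hβ₂ : a₁ * (β - 1) ≤ a₂) (hb : b ∈ digits a₁ a₂) :
    childLength β a₁ a₂ t b ≤ a₁ := by
  refine (sub_le_sub_right (min_le_right _ _) b).trans ?_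
  unfold nextDigit
  split_ifs with h₀ h₁
  · rw [h₀, sub_zero]
  · linarith
  · linarith [((mem_digits.1 hb).resolve_left h₀).resolve_left h₁]

@[simp]
theorem imageLength_append_singleton :
    imageLength β a₁ a₂ (w ++ [b]) = childLength β a₁ a₂ (imageLength β a₁ a₂ w) b := by
  simp only [imageLength, List.foldl_append, List.foldl_cons, List.foldl_nil]

theorem imageLength_le (h₂ : a₂ ≤ a₁ * 2) (hβ₂ : a₁ * (β - 1) ≤ a₂) (hw : isWord a₁ a₂ w) :
    imageLength β a₁ a₂ w ≤ a₁ := by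
  cases w using List.reverseRecOn with
  | nil => exact le_rfl
  | append_singleton w b =>
    rw [imageLength_append_singleton]
    exact childLength_le h₂ hβ₂ (isWord_append_singleton.1 hw).2

@[simp]
theorem affineBranch_append_singleton :
    affineBranch β (w ++ [b]) x = β * affineBranch β w x - b := by
  simp only [affineBranch, List.foldl_append, List.foldl_cons, List.foldl_nil]

theorem affineBranch_eq (β : ℝ) (w : List ℝ) (x : ℝ) :
    affineBranch β w x = β ^ w.length * x + affineBranch β w 0 := by
  induction w using List.reverseRecOn with
  | nil => simp [affineBranch]
  | append_singleton w b ih =>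
    rw [affineBranch_append_singleton, affineBranch_append_singleton, ih, List.length_append,
      List.length_singleton]
    ring

theorem volume_preimage_affineBranch_Ico (hβ : 0 < β) (w : List ℝ) (l u : ℝ) :
    volume (affineBranch β w ⁻¹' Ico l u) = ENNReal.ofReal ((u - l) / β ^ w.length) := by
  have hpow : 0 < β ^ w.length := by positivity
  have hcomp : affineBranch β w = (· + affineBranch β w 0) ∘ (β ^ w.length * ·) :=
    funext (affineBranch_eq β w)
  rw [hcomp, preimage_comp, preimage_add_const_Ico, preimage_const_mul_Ico₀ _ _ hpow,
    Real.volume_Ico, ← sub_div, sub_sub_sub_cancel_right]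

@[simp]
theorem cyl_nil : cyl β a₁ a₂ [] = univ := by
  simp [cyl]

theorem cyl_append_singleton :
    cyl β a₁ a₂ (w ++ [b]) =
      cyl β a₁ a₂ w ∩ (greedyT β a₁ a₂)^[w.length] ⁻¹' digitInt β a₁ a₂ b := by
  have hprefix : ∀ k ∈ Finset.range w.length, (w ++ [b]).getD k 0 = w.getD k 0 := fun k hk =>
    List.getD_append _ _ _ _ (Finset.mem_range.1 hk)
  have hlast : (w ++ [b]).getD w.length 0 = b := by simp
  rw [cyl, List.length_append, List.length_singleton, Finset.range_add_one,
    Finset.set_biInter_insert, hlast, inter_comm, cyl]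
  congr 1
  exact iInter₂_congr fun k hk => by rw [hprefix k hk]

theorem cyl_subset_Ico (hβ : 0 < β) (ha₁ : 0 ≤ a₁) (h₁₂ : a₁ ≤ a₂) (h₂β : a₂ ≤ a₁ * β)
    (hw : w ≠ []) : cyl β a₁ a₂ w ⊆ Ico 0 a₁ := fun _ hx =>
  digitInt_subset_Ico hβ ha₁ h₁₂ h₂β
    (mem_iInter₂.1 hx 0 (Finset.mem_range.2 (List.length_pos_iff.2 hw)))

theorem iterate_greedyT_of_mem_cyl (hβ : 0 < β) (h₁₂ : a₁ ≤ a₂) (hw : isWord a₁ a₂ w)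
    (hx : x ∈ cyl β a₁ a₂ w) : (greedyT β a₁ a₂)^[w.length] x = affineBranch β w x := by
  induction w using List.reverseRecOn with
  | nil => rfl
  | append_singleton w b ih =>
    obtain ⟨hw, hb⟩ := isWord_append_singleton.1 hw
    rw [cyl_append_singleton] at hx
    rw [List.length_append, List.length_singleton, Function.iterate_succ_apply',
      greedyT_of_mem_digitInt hβ h₁₂ hb hx.2, ih hw hx.1, affineBranch_append_singleton]

theorem Ico_inter_cyl (hβ : 0 < β) (ha₁ : 0 ≤ a₁) (h₁₂ : a₁ ≤ a₂) (hw : isWord a₁ a₂ w) :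
    Ico 0 a₁ ∩ cyl β a₁ a₂ w = affineBranch β w ⁻¹' Ico 0 (imageLength β a₁ a₂ w) := by
  induction w using List.reverseRecOn with
  | nil => rw [cyl_nil, inter_univ]; rfl
  | append_singleton w b ih =>
    obtain ⟨hw, hb⟩ := isWord_append_singleton.1 hw
    have hb₀ : 0 ≤ b := nonneg_of_mem_digits ha₁ (ha₁.trans h₁₂) hb
    ext x
    calc x ∈ Ico 0 a₁ ∩ cyl β a₁ a₂ (w ++ [b])
        ↔ x ∈ Ico 0 a₁ ∩ cyl β a₁ a₂ w ∧
            (greedyT β a₁ a₂)^[w.length] x ∈ digitInt β a₁ a₂ b := by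
          rw [cyl_append_singleton, ← inter_assoc, mem_inter_iff, mem_preimage]
      _ ↔ x ∈ Ico 0 a₁ ∩ cyl β a₁ a₂ w ∧ affineBranch β w x ∈ digitInt β a₁ a₂ b :=
          and_congr_right fun hx => by rw [iterate_greedyT_of_mem_cyl hβ h₁₂ hw hx.2]
      _ ↔ affineBranch β w x ∈ Ico 0 (imageLength β a₁ a₂ w) ∧
            affineBranch β w x ∈ digitInt β a₁ a₂ b := by rw [ih hw, mem_preimage]
      _ ↔ x ∈ affineBranch β (w ++ [b]) ⁻¹' Ico 0 (imageLength β a₁ a₂ (w ++ [b])) := by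
          rw [mem_Ico_and_mem_digitInt_iff hβ hb hb₀, mem_preimage, affineBranch_append_singleton,
            imageLength_append_singleton]

theorem volume_cyl (hβ : 0 < β) (ha₁ : 0 ≤ a₁) (h₁₂ : a₁ ≤ a₂) (h₂β : a₂ ≤ a₁ * β)
    (hw : isWord a₁ a₂ w) (hne : w ≠ []) :
    volume (cyl β a₁ a₂ w) = ENNReal.ofReal (imageLength β a₁ a₂ w / β ^ w.length) := by
  rw [← inter_eq_right.2 (cyl_subset_Ico hβ ha₁ h₁₂ h₂β hne), Ico_inter_cyl hβ ha₁ h₁₂ hw,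
    volume_preimage_affineBranch_Ico hβ, sub_zero]

theorem not_isFull_nil : ¬ isFull β a₁ a₂ [] := by
  simp [isFull]

theorem imageLength_mem_Ioo (hβ : 0 < β) (ha₁ : 0 ≤ a₁) (h₁₂ : a₁ ≤ a₂) (h₂ : a₂ ≤ a₁ * 2)
    (hβ₂ : a₁ * (β - 1) ≤ a₂) (h₂β : a₂ ≤ a₁ * β) (hw : isWord a₁ a₂ w) (hne : w ≠ [])
    (hpos : 0 < volume (cyl β a₁ a₂ w)) (hfull : ¬ isFull β a₁ a₂ w) :
    imageLength β a₁ a₂ w ∈ Ioo 0 a₁ := by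
  have hvol := volume_cyl hβ ha₁ h₁₂ h₂β hw hne
  refine ⟨?_, (imageLength_le h₂ hβ₂ hw).lt_of_ne fun h => hfull (by rw [isFull, hvol, h])⟩
  rw [hvol, ENNReal.ofReal_pos] at hpos
  exact (div_pos_iff_of_pos_right (by positivity)).1 hpos

theorem memB_of_append_singleton (h : memB β a₁ a₂ (n + 1) (w ++ [b])) : memB β a₁ a₂ n w := by
  obtain ⟨hlen, hword, hpos, -, hprefix⟩ := h
  have hlen_w : w.length = n := by simpa using hlen
  have hlt (v : List ℝ) (hv : v <+: w) : v ≠ w ++ [b] := by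
    rintro rfl
    simpa using hv.length_le
  refine ⟨hlen_w, (isWord_append_singleton.1 hword).1, ?_, ?_, fun v hne hv _ => ?_⟩
  · rw [cyl_append_singleton] at hpos
    exact hpos.trans_le (measure_mono inter_subset_left)
  · rcases eq_or_ne w [] with rfl | hne
    · exact not_isFull_nil
    · exact hprefix w hne (w.prefix_append [b]) (hlt w List.prefix_rfl)
  · exact hprefix v hne (hv.trans (w.prefix_append [b])) (hlt v hv)

theorem mem_nonfullWords_of_memB (hβ : 0 < β) (ha₁ : 0 ≤ a₁) (h₁₂ : a₁ ≤ a₂) (h₂ : a₂ ≤ a₁ * 2)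
    (hβ₂ : a₁ * (β - 1) ≤ a₂) (h₂β : a₂ ≤ a₁ * β) (h : memB β a₁ a₂ n w) :
    w ∈ nonfullWords β a₁ a₂ n := by
  induction w using List.reverseRecOn generalizing n with
  | nil =>
    obtain rfl : 0 = n := h.1
    exact Finset.mem_singleton_self _
  | append_singleton w b ih =>
    obtain rfl : w.length + 1 = n := by simpa using h.1
    have hw := ih (memB_of_append_singleton h)
    obtain ⟨-, hword, hpos, hfull, -⟩ := h
    have hlen := imageLength_mem_Ioo hβ ha₁ h₁₂ h₂ hβ₂ h₂β hword (by simp) hpos hfull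
    rw [imageLength_append_singleton] at hlen
    have hb : b ∈ nonfullDigits β a₁ a₂ (imageLength β a₁ a₂ w) :=
      Finset.mem_filter.2 ⟨(isWord_append_singleton.1 hword).2, hlen⟩
    exact Finset.mem_image_of_mem (fun p : (_ : List ℝ) × ℝ => p.1 ++ [p.2])
      (Finset.mem_sigma.2 ⟨hw, hb⟩ : (⟨w, b⟩ : (_ : List ℝ) × ℝ) ∈ _)

theorem kappa_le_card_nonfullWords (hβ : 0 < β) (ha₁ : 0 ≤ a₁) (h₁₂ : a₁ ≤ a₂)
    (h₂ : a₂ ≤ a₁ * 2) (hβ₂ : a₁ * (β - 1) ≤ a₂) (h₂β : a₂ ≤ a₁ * β) (n : ℕ) :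
    kappa β a₁ a₂ n ≤ (nonfullWords β a₁ a₂ n).card := by
  rw [kappa, ← ncard_coe_finset]
  exact ncard_le_ncard (fun w hw => mem_nonfullWords_of_memB hβ ha₁ h₁₂ h₂ hβ₂ h₂β hw)
    (Finset.finite_toSet _)

theorem sum_nonfullDigits_le (hβ : 0 ≤ β) (ha₁ : 0 < a₁) (h₁₂ : a₁ < a₂) (ht₀ : 0 ≤ t)
    (ht : t ≤ a₁) :
    ∑ b ∈ nonfullDigits β a₁ a₂ t, (a₁ + childLength β a₁ a₂ t b) ≤ a₁ + β * t := by
  have ha₂ : 0 < a₂ := ha₁.trans h₁₂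
  have hlen₀ : childLength β a₁ a₂ t 0 = min (β * t) a₁ := by simp [childLength, nextDigit]
  have hlen₁ : childLength β a₁ a₂ t a₁ = min (β * t) a₂ - a₁ := by
    simp [childLength, nextDigit, ha₁.ne']
  have hlen₂ : childLength β a₁ a₂ t a₂ = β * t - a₂ := by
    have htop : β * t ≤ β * a₁ := by gcongr
    simp [childLength, nextDigit, ha₂.ne', h₁₂.ne', htop]
  have hs : 0 ≤ β * t := by positivity
  rw [nonfullDigits, Finset.sum_filter, digits, Finset.sum_insert (by simp [ha₁.ne, ha₂.ne]),
    Finset.sum_insert (by simp [h₁₂.ne]), Finset.sum_singleton, hlen₀, hlen₁, hlen₂]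
  simp only [mem_Ioo]
  rcases lt_or_ge (β * t) a₁ with h₁ | h₁
  · rw [min_eq_left h₁.le, min_eq_left (h₁.trans h₁₂).le]
    split_ifs <;> linarith
  rcases le_or_gt (β * t) a₂ with h₂ | h₂
  · rw [min_eq_right h₁, min_eq_left h₂]
    split_ifs <;> linarith
  · rw [min_eq_right h₁, min_eq_right h₂.le]
    split_ifs <;> linarith

theorem imageLength_pos_of_mem_nonfullWords (ha₁ : 0 < a₁) (hw : w ∈ nonfullWords β a₁ a₂ n) :
    0 < imageLength β a₁ a₂ w := by
  cases n with
  | zero =>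
    obtain rfl : w = [] := Finset.mem_singleton.1 hw
    exact ha₁
  | succ n =>
    obtain ⟨p, hp, rfl⟩ := Finset.mem_image.1 hw
    rw [imageLength_append_singleton]
    exact (Finset.mem_filter.1 (Finset.mem_sigma.1 hp).2).2.1

theorem imageLength_le_of_mem_nonfullWords (hw : w ∈ nonfullWords β a₁ a₂ n) :
    imageLength β a₁ a₂ w ≤ a₁ := by
  cases n with
  | zero =>
    obtain rfl : w = [] := Finset.mem_singleton.1 hw
    exact le_rfl
  | succ n =>
    obtain ⟨p, hp, rfl⟩ := Finset.mem_image.1 hw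
    rw [imageLength_append_singleton]
    exact (Finset.mem_filter.1 (Finset.mem_sigma.1 hp).2).2.2.le

theorem sum_nonfullWords_succ (f : List ℝ → ℝ) :
    ∑ w ∈ nonfullWords β a₁ a₂ (n + 1), f w =
      ∑ w ∈ nonfullWords β a₁ a₂ n,
        ∑ b ∈ nonfullDigits β a₁ a₂ (imageLength β a₁ a₂ w), f (w ++ [b]) := by
  rw [nonfullWords, Finset.sum_image, Finset.sum_sigma]
  rintro ⟨v, b⟩ - ⟨w, c⟩ - h
  obtain ⟨rfl, rfl⟩ : v = w ∧ b = c := by simpa using h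
  rfl

theorem sum_nonfullWords_succ_le (hβ : 0 ≤ β) (ha₁ : 0 < a₁) (h₁₂ : a₁ < a₂) (n : ℕ) :
    ∑ w ∈ nonfullWords β a₁ a₂ (n + 1), (a₁ + imageLength β a₁ a₂ w) ≤
      ∑ w ∈ nonfullWords β a₁ a₂ n, (a₁ + β * imageLength β a₁ a₂ w) := by
  rw [sum_nonfullWords_succ]
  refine Finset.sum_le_sum fun w hw => ?_
  simp only [imageLength_append_singleton]
  exact sum_nonfullDigits_le hβ ha₁ h₁₂ (imageLength_pos_of_mem_nonfullWords ha₁ hw).le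
    (imageLength_le_of_mem_nonfullWords hw)

theorem summable_card_nonfullWords_div_pow (hβ : 1 < β) (ha₁ : 0 < a₁) (h₁₂ : a₁ < a₂) :
    Summable fun n => ((nonfullWords β a₁ a₂ n).card : ℝ) / β ^ n := by
  have hrec (n : ℕ) := sum_nonfullWords_succ_le (zero_le_one.trans hβ.le) ha₁ h₁₂ n
  simp only [Finset.sum_add_distrib, Finset.sum_const, nsmul_eq_mul, ← Finset.mul_sum] at hrec
  have hsum := summable_div_pow_of_add_le hβ
    (N := fun n => (nonfullWords β a₁ a₂ n).card * a₁)
    (L := fun n => ∑ w ∈ nonfullWords β a₁ a₂ n, imageLength β a₁ a₂ w) (fun n => by positivity)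
    (fun n => Finset.sum_nonneg fun w hw => (imageLength_pos_of_mem_nonfullWords ha₁ hw).le) hrec
  refine (summable_mul_right_iff ha₁.ne').1 (hsum.congr fun n => ?_)
  ring

end

/-- The series `Σ_{n≥1} κ(n)·a₁²/βⁿ` converges; equivalently the
sequence `n ↦ κ(n)/βⁿ` is summable. (Finiteness of the total measure
`λ_R(R)` of the natural-extension domain.) -/
theorem stmt11 (β a₁ a₂ : ℝ) (hβ1 : 1 < β) (hβ3 : β < 3)
    (ha₁ : 0 < a₁) (h12 : a₁ < a₂) (hc : condition6 β a₁ a₂) :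
    Summable (fun n : ℕ => (kappa β a₁ a₂ (n + 1) : ℝ) * a₁ ^ 2 / β ^ (n + 1)) ∧
    Summable (fun n : ℕ => (kappa β a₁ a₂ (n + 1) : ℝ) / β ^ (n + 1)) := by
  obtain ⟨⟨hβ₂, -⟩, h₂, h₂β⟩ := (condition6_iff ha₁).1 hc
  have hβ : 0 < β := one_pos.trans hβ1
  have hsum : Summable fun n => (kappa β a₁ a₂ n : ℝ) / β ^ n := by
    refine (summable_card_nonfullWords_div_pow hβ1 ha₁ h12).of_nonneg_of_le
      (fun n => by positivity) fun n => ?_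
    gcongr
    exact kappa_le_card_nonfullWords hβ ha₁.le h12.le h₂.le hβ₂.le h₂β.le n
  have hsum_succ := (summable_nat_add_iff 1).2 hsum
  exact ⟨(hsum_succ.mul_right (a₁ ^ 2)).congr fun n => by ring, hsum_succ⟩
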